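/- Assume α_0 = 0 and no α_i with i ≥ 1 is a negative integer. Then for every x ∈ ℂ∖{0}, D_μ j_μ(x) = j_μ'(x) = −(1/((α_1+1)(α_2+1)⋯(α_{r−1}+1))) · (x/r)^{r−1} · j_{μ+1}(x), where μ+1 = (0, α_1+1, …, α_{r−1}+1). -/

import Mathlib

open Complex MeasureTheory Real Filter Topology

noncomputable section

/-- ω = exp(2πi/r) -/
def om (r : ℕ) : ℂ := Complex.exp (2 * Real.pi * Complex.I / r)

/-- θ = exp(iπ/r) -/
def th (r : ℕ) : ℂ := Complex.exp (Real.pi * Complex.I / r)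

/-- projector T_k -/
def Tk (r k : ℕ) (g : ℂ → ℂ) (x : ℂ) : ℂ :=
  (r : ℂ)⁻¹ * ∑ n ∈ Finset.range r, om r ^ (k * n) * g (om r ^ n * x)

/-- L_a f = f' + (a/x) f -/
def Lop (a : ℝ) (f : ℂ → ℂ) (x : ℂ) : ℂ := deriv f x + (a / x) * f x

/-- a_k = r α_k + k -/
def acoef (r : ℕ) (α : ℕ → ℝ) (k : ℕ) : ℝ := r * α k + k

/-- Δ_μ = L_{a_{r-1}} ∘ ⋯ ∘ L_{a_0} -/
def Delta (r : ℕ) (α : ℕ → ℝ) (f : ℂ → ℂ) : ℂ → ℂ :=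
  (List.range r).foldl (fun g i => Lop (acoef r α i) g) f

/-- D_μ -/
def Dop (r : ℕ) (α : ℕ → ℝ) (f : ℂ → ℂ) (x : ℂ) : ℂ :=
  deriv f x + (1 / x) * ∑ k ∈ Finset.range r, ((acoef r α k : ℝ) : ℂ) * Tk r k f x

/-- Pochhammer symbol (β)_n -/
def poch (β : ℝ) (n : ℕ) : ℝ := (ascPochhammer ℝ n).eval β

/-- Bessel function of vector index -/
def jmu (r : ℕ) (α : ℕ → ℝ) (z : ℂ) : ℂ :=
  ∑' n : ℕ, (-1 : ℂ) ^ n * z ^ (n * r) /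
    ((∏ i ∈ Finset.range r, ((poch (α i + 1) n : ℝ) : ℂ)) * (r : ℂ) ^ (n * r))

/-- r-Dunkl kernel -/
def Emu (r : ℕ) (α : ℕ → ℝ) (z : ℂ) : ℂ :=
  ∑ k ∈ Finset.range r, th r ^ (-(k : ℤ)) * (Dop r α)^[k] (jmu r α) z

/-- generalized cosine -/
def cosr (r : ℕ) (z : ℂ) : ℂ :=
  ∑' n : ℕ, (-1 : ℂ) ^ n * z ^ (n * r) /
    ((∏ i ∈ Finset.range r, ((poch (1 - (i : ℝ) / r) n : ℝ) : ℂ)) * (r : ℂ) ^ (n * r))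

/-- weight w_μ on [0,1]^r -/
def wmu (r : ℕ) (α : ℕ → ℝ) (u : Fin r → ℝ) : ℝ :=
  ∏ i : Fin r, (1 - u i ^ r) ^ (α i.1 + (i.1 : ℝ) / r - 1) * u i ^ (r - (i.1 + 1))

/-- constant c_μ -/
def cmu (r : ℕ) (α : ℕ → ℝ) : ℝ :=
  ∏ i ∈ Finset.range r,
    r * Real.Gamma (α i + 1) / (Real.Gamma (α i + (i : ℝ) / r) * Real.Gamma (1 - (i : ℝ) / r))

/-- L_{a_{k-1}} ∘ ⋯ ∘ L_{a_0} -/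
def Lcomp (r : ℕ) (α : ℕ → ℝ) (k : ℕ) (f : ℂ → ℂ) : ℂ → ℂ :=
  (List.range k).foldl (fun g i => Lop (acoef r α i) g) f

/-- r-Riemann–Liouville on the half line -/
def Rop (r : ℕ) (a : ℝ) (g : ℝ → ℂ) (x : ℝ) : ℂ :=
  ∫ t in (0:ℝ)..1, g (x * t) * (((1 - t ^ r) ^ (a - 1) : ℝ) : ℂ)

/-- r-Riemann–Liouville along rays in ℂ -/
def RopC (r : ℕ) (a : ℝ) (f : ℂ → ℂ) (z : ℂ) : ℂ :=
  ∫ t in (0:ℝ)..1, f (z * t) * (((1 - t ^ r) ^ (a - 1) : ℝ) : ℂ)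

/-- the operator M h = (1/(r x^{r-1})) h' -/
def Mop (r : ℕ) (h : ℝ → ℂ) (x : ℝ) : ℂ := ((1 / (r * x ^ (r - 1)) : ℝ) : ℂ) * deriv h x

/-- hermitian product ⟨f,g⟩_a -/
def inr (r : ℕ) (a : ℝ) (f g : ℂ → ℂ) : ℂ :=
  ∫ t in Set.Ioi (0:ℝ),
    (∑ m ∈ Finset.range r, f (om r ^ m * t) * (starRingEnd ℂ) (g (om r ^ m * t))) *
      ((t ^ a : ℝ) : ℂ)

/-- transmutation operator V_μ -/
def Vmu (r : ℕ) (α : ℕ → ℝ) (h : ℂ → ℂ) (x : ℂ) : ℂ :=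
  (cmu r α : ℂ) *
    ∫ u in Set.univ.pi (fun _ : Fin r => Set.Icc (0:ℝ) 1),
      (Tk r 0 (fun z => h (z * ∏ i, (u i : ℂ))) x +
        ∑ k ∈ Finset.Ico 1 r,
          th r ^ (-(k : ℤ)) * Tk r k (Lcomp r α k (fun z => h (z * ∏ i, (u i : ℂ)))) x) *
        ((wmu r α u : ℝ) : ℂ)

/-!
The function `j_μ` is an entire power series `∑ cₙ (x ^ r) ^ n` in `x ^ r`, hence invariant under
the rotation `x ↦ ω x`. On rotation-invariant functions `T_0` is the identity and the other `T_k`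
with `k < r` vanish, so `D_μ` reduces to `L_{a_0}`, which is the derivative when `α_0 = 0`.
Differentiating the series termwise, the formula becomes the coefficient identity
`(n + 1) cₙ₊₁(μ) = -cₙ(μ + 1) / (r ^ r ∏_{i ≥ 1} (α_i + 1))`: the factor `n + 1` cancels the one
that `(1)ₙ₊₁ = (1)ₙ (n + 1)` contributes at index `0`, and `(β)ₙ₊₁ = β (β + 1)ₙ` shifts the other
indices.
-/

section PowerSeries

open FormalMultilinearSeries

lemma hasDerivAt_ofScalarsSum {𝕜 : Type*} [NontriviallyNormedField 𝕜] [CompleteSpace 𝕜]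
    {c : ℕ → 𝕜} {w : 𝕜} (hw : ‖w‖ₑ < (ofScalars 𝕜 c).radius) :
    HasDerivAt (ofScalarsSum c) (ofScalarsSum (fun n ↦ (n + 1) * c (n + 1)) w) w := by
  set p := ofScalars 𝕜 c
  have hasSum_derivSeries : HasSum (fun n ↦ p.derivSeries n fun _ ↦ w) (p.derivSeries.sum w) :=
    p.derivSeries.hasSum <| by
      simpa using hw.trans_le p.radius_le_radius_derivSeries
  have derivSeries_sum_one :
      p.derivSeries.sum w 1 = ofScalarsSum (fun n ↦ (n + 1) * c (n + 1)) w := by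
    rw [ofScalars_sum_eq]
    refine (hasSum_derivSeries.mapL (.apply 𝕜 𝕜 1)).tsum_eq.symm.trans (tsum_congr fun n ↦ ?_)
    simp [p, derivSeries_coeff_one, coeff_ofScalars, mul_comm]
  rw [← derivSeries_sum_one]
  exact (p.hasFDerivAt_sum hw).hasDerivAt

end PowerSeries

lemma tendsto_ofReal_add_natCast_inv (b : ℝ) :
    Tendsto (fun n : ℕ ↦ ((b + n : ℝ) : ℂ)⁻¹) atTop (𝓝 0) := by
  have tendsto_real : Tendsto (fun n : ℕ ↦ (b + n)⁻¹) atTop (𝓝 0) :=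
    (tendsto_atTop_add_const_left _ b tendsto_natCast_atTop_atTop).inv_tendsto_atTop
  simpa using tendsto_real.ofReal

section RotationInvariant

variable {r : ℕ} {g : ℂ → ℂ}

lemma isPrimitiveRoot_om (hr : r ≠ 0) : IsPrimitiveRoot (om r) r :=
  Complex.isPrimitiveRoot_exp r hr

lemma Tk_of_invariant (hg : ∀ x, g (om r * x) = g x) (k : ℕ) (x : ℂ) :
    Tk r k g x = (r : ℂ)⁻¹ * (∑ n ∈ Finset.range r, (om r ^ k) ^ n) * g x := by
  have invariant_pow (n : ℕ) : g (om r ^ n * x) = g x := by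
    induction n with
    | zero => simp
    | succ n ih => rw [pow_succ', mul_assoc, hg, ih]
  simp only [Tk, invariant_pow, pow_mul, Finset.sum_mul, mul_assoc]

lemma Tk_zero_of_invariant (hr : r ≠ 0) (hg : ∀ x, g (om r * x) = g x) (x : ℂ) :
    Tk r 0 g x = g x := by
  simp [Tk_of_invariant hg, hr]

lemma Tk_eq_zero_of_invariant (hr : r ≠ 0) (hg : ∀ x, g (om r * x) = g x) {k : ℕ}
    (hk : ¬r ∣ k) (x : ℂ) : Tk r k g x = 0 := by
  have om_pow_ne_one : om r ^ k ≠ 1 := ((isPrimitiveRoot_om hr).pow_eq_one_iff_dvd k).not.mpr hk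
  have om_pow_pow_eq_one : (om r ^ k) ^ r = 1 := by
    rw [pow_right_comm, (isPrimitiveRoot_om hr).pow_eq_one, one_pow]
  rw [Tk_of_invariant hg, geom_sum_eq om_pow_ne_one, om_pow_pow_eq_one]
  simp

lemma Dop_eq_Lop_of_invariant (hr : r ≠ 0) (hg : ∀ x, g (om r * x) = g x) (α : ℕ → ℝ) (x : ℂ) :
    Dop r α g x = Lop (acoef r α 0) g x := by
  have sum_eq : ∑ k ∈ Finset.range r, (acoef r α k : ℂ) * Tk r k g x = acoef r α 0 * g x := by
    rw [Finset.sum_eq_single_of_mem 0 (Finset.mem_range.mpr (Nat.pos_of_ne_zero hr)),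
      Tk_zero_of_invariant hr hg]
    intro k hk hk0
    rw [Tk_eq_zero_of_invariant hr hg
      (Nat.not_dvd_of_pos_of_lt (Nat.pos_of_ne_zero hk0) (Finset.mem_range.mp hk)), mul_zero]
  rw [Dop, Lop, sum_eq]
  ring

end RotationInvariant

lemma poch_succ_right (β : ℝ) (n : ℕ) : poch β (n + 1) = poch β n * (β + n) :=
  ascPochhammer_succ_eval n β

lemma poch_succ_left (β : ℝ) (n : ℕ) : poch β (n + 1) = β * poch (β + 1) n := by
  simp [poch, ascPochhammer_succ_left]

lemma poch_ne_zero {β : ℝ} (hβ : ∀ n : ℕ, β ≠ -n) (n : ℕ) : poch β n ≠ 0 := by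
  rw [poch, Ne, ascPochhammer_eval_eq_zero_iff]
  rintro ⟨k, -, hk⟩
  exact hβ k (by linarith)

/-- The coefficient of `(x ^ r) ^ n` in the power series of the Bessel function `jmu r α x`. -/
def besselCoeff (r : ℕ) (α : ℕ → ℝ) (n : ℕ) : ℂ :=
  (-1) ^ n / ((∏ i ∈ Finset.range r, (poch (α i + 1) n : ℂ)) * (r : ℂ) ^ (n * r))

/-- The index vector `μ + 1 = (0, α_1 + 1, …, α_{r-1} + 1)`, whose entry at `0` is not shifted. -/
def succIndex (α : ℕ → ℝ) (i : ℕ) : ℝ := if i = 0 then 0 else α i + 1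

section Bessel

open FormalMultilinearSeries

variable {r : ℕ} {α : ℕ → ℝ}

lemma jmu_eq_ofScalarsSum (r : ℕ) (α : ℕ → ℝ) (z : ℂ) :
    jmu r α z = ofScalarsSum (besselCoeff r α) (z ^ r) := by
  rw [jmu, ofScalars_sum_eq]
  refine tsum_congr fun n ↦ ?_
  rw [besselCoeff, smul_eq_mul, ← pow_mul, mul_comm r n]
  ring

lemma jmu_om_mul (hr : r ≠ 0) (α : ℕ → ℝ) (x : ℂ) : jmu r α (om r * x) = jmu r α x := by
  rw [jmu_eq_ofScalarsSum, jmu_eq_ofScalarsSum, mul_pow, (isPrimitiveRoot_om hr).pow_eq_one,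
    one_mul]

lemma besselCoeff_ne_zero (hr : r ≠ 0) (hα : ∀ i < r, ∀ n : ℕ, α i ≠ -((n : ℝ) + 1)) (n : ℕ) :
    besselCoeff r α n ≠ 0 := by
  have poch_ne (i : ℕ) (hi : i ∈ Finset.range r) : (poch (α i + 1) n : ℂ) ≠ 0 := by
    refine ofReal_ne_zero.mpr (poch_ne_zero (fun m hm ↦ ?_) n)
    exact hα i (Finset.mem_range.mp hi) m (by linarith)
  exact div_ne_zero (by simp)
    (mul_ne_zero (Finset.prod_ne_zero_iff.mpr poch_ne) (by simp [hr]))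

lemma besselCoeff_succ (r : ℕ) (α : ℕ → ℝ) (n : ℕ) :
    besselCoeff r α (n + 1) = besselCoeff r α n *
      -((∏ i ∈ Finset.range r, ((α i + 1 + n : ℝ) : ℂ)⁻¹) * ((r : ℂ) ^ r)⁻¹) := by
  simp only [besselCoeff, poch_succ_right, ofReal_mul, Finset.prod_mul_distrib,
    Finset.prod_inv_distrib, Nat.succ_mul, pow_add, pow_one, div_eq_mul_inv, mul_inv]
  ring

lemma radius_ofScalars_besselCoeff (hr : r ≠ 0) (hα : ∀ i < r, ∀ n : ℕ, α i ≠ -((n : ℝ) + 1)) :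
    (ofScalars ℂ (besselCoeff r α)).radius = ⊤ := by
  have coeff_ne_zero := besselCoeff_ne_zero hr hα
  have tendsto_ratio : Tendsto (fun n : ℕ ↦
      -((∏ i ∈ Finset.range r, ((α i + 1 + n : ℝ) : ℂ)⁻¹) * ((r : ℂ) ^ r)⁻¹)) atTop (𝓝 0) := by
    simpa [hr] using ((tendsto_finsetProd (Finset.range r)
      fun i _ ↦ tendsto_ofReal_add_natCast_inv (α i + 1)).mul_const ((r : ℂ) ^ r)⁻¹).neg
  refine ofScalars_radius_eq_top_of_tendsto ℂ _ (.of_forall coeff_ne_zero) ?_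
  refine (tendsto_zero_iff_norm_tendsto_zero.mp tendsto_ratio).congr fun n ↦ ?_
  rw [Nat.succ_eq_add_one, besselCoeff_succ, norm_mul,
    mul_div_cancel_left₀ _ (norm_ne_zero_iff.mpr (coeff_ne_zero n))]

lemma prod_poch_succ (hr : r ≠ 0) (hα0 : α 0 = 0) (n : ℕ) :
    ∏ i ∈ Finset.range r, (poch (α i + 1) (n + 1) : ℂ) =
      (n + 1) * (∏ i ∈ Finset.Ico 1 r, ((α i + 1 : ℝ) : ℂ)) *
        ∏ i ∈ Finset.range r, (poch (succIndex α i + 1) n : ℂ) := by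
  have poch_shift : ∀ i ∈ Finset.Ico 1 r,
      (poch (α i + 1) (n + 1) : ℂ) = (α i + 1 : ℝ) * poch (succIndex α i + 1) n := by
    intro i hi
    rw [succIndex, if_neg (Nat.one_le_iff_ne_zero.mp (Finset.mem_Ico.mp hi).1),
      poch_succ_left, ofReal_mul]
  rw [Finset.prod_range_eq_mul_Ico _ (Nat.pos_of_ne_zero hr),
    Finset.prod_range_eq_mul_Ico _ (Nat.pos_of_ne_zero hr), Finset.prod_congr rfl poch_shift,
    Finset.prod_mul_distrib, poch_succ_right, hα0, succIndex, if_pos rfl]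
  push_cast
  ring

lemma succ_mul_besselCoeff_succ (hr : r ≠ 0) (hα0 : α 0 = 0) (n : ℕ) :
    ((n : ℂ) + 1) * besselCoeff r α (n + 1) =
      -(1 / ∏ i ∈ Finset.Ico 1 r, ((α i + 1 : ℝ) : ℂ)) * ((r : ℂ) ^ r)⁻¹ *
        besselCoeff r (succIndex α) n := by
  have n_add_one_ne_zero : (n : ℂ) + 1 ≠ 0 := n.cast_add_one_ne_zero
  rw [besselCoeff, besselCoeff, prod_poch_succ hr hα0, Nat.succ_mul, pow_add, pow_succ]
  simp only [div_eq_mul_inv, mul_inv]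
  field_simp
  ring

lemma hasDerivAt_jmu (hr : r ≠ 0) (hα0 : α 0 = 0)
    (hα : ∀ i, 1 ≤ i → i < r → ∀ n : ℕ, α i ≠ -((n : ℝ) + 1)) (x : ℂ) :
    HasDerivAt (jmu r α)
      (-(1 / ∏ i ∈ Finset.Ico 1 r, ((α i + 1 : ℝ) : ℂ)) * (x / r) ^ (r - 1) *
        jmu r (succIndex α) x) x := by
  have index_ne : ∀ i < r, ∀ n : ℕ, α i ≠ -((n : ℝ) + 1) := by
    intro i hi n
    rcases Nat.eq_zero_or_pos i with rfl | hi_pos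
    · linarith [n.cast_nonneg (α := ℝ)]
    · exact hα i hi_pos hi n
  have hasDerivAt_series := (hasDerivAt_ofScalarsSum (c := besselCoeff r α) (w := x ^ r)
    (by simp [radius_ofScalars_besselCoeff hr index_ne])).comp x (hasDerivAt_pow r x)
  rw [funext (jmu_eq_ofScalarsSum r α)]
  refine hasDerivAt_series.congr_deriv ?_
  simp only [succ_mul_besselCoeff_succ hr hα0, jmu_eq_ofScalarsSum, ofScalars_sum_eq, smul_eq_mul,
    mul_assoc, tsum_mul_left]
  rw [← mul_pow_sub_one hr (r : ℂ), div_pow]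
  field_simp

end Bessel

theorem stmt4 (r : ℕ) (hr : 2 ≤ r) (α : ℕ → ℝ)
    (hα0 : α 0 = 0)
    (hα : ∀ i, 1 ≤ i → i < r → ∀ n : ℕ, α i ≠ -((n : ℝ) + 1)) :
    ∀ x : ℂ, x ≠ 0 →
      Dop r α (jmu r α) x = deriv (jmu r α) x ∧
      Dop r α (jmu r α) x =
        -(1 / ∏ i ∈ Finset.Ico 1 r, ((α i + 1 : ℝ) : ℂ)) * (x / r) ^ (r - 1) *
          jmu r (fun i => if i = 0 then 0 else α i + 1) x := by
  intro x _
  have hr0 : r ≠ 0 := by omega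
  have Dop_eq_deriv : Dop r α (jmu r α) x = deriv (jmu r α) x := by
    rw [Dop_eq_Lop_of_invariant hr0 (jmu_om_mul hr0 α)]
    simp [Lop, acoef, hα0]
  exact ⟨Dop_eq_deriv, Dop_eq_deriv.trans (hasDerivAt_jmu hr0 hα0 hα x).deriv⟩
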